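/- Let x ∈ sl_n(ℂ) be a matrix having exactly one Jordan block for each of its eigenvalues (i.e. for each eigenvalue μ, the μ-eigenspace of x is one-dimensional). Then x is a regular point of the adjoint quotient map χ: sl_n → ℂ^{n-1} sending a matrix to the nontrivial coefficients of its characteristic polynomial, i.e. the derivative of χ at x is surjective. -/

import Mathlib

attribute [local instance] Matrix.normedAddCommGroup Matrix.normedSpace

/-- The trace-zero matrices `sl_n(ℂ)` as a subspace of all `n×n` complex matrices. -/
noncomputable def slC (n : ℕ) : Submodule ℂ (Matrix (Fin n) (Fin n) ℂ) :=
  LinearMap.ker (Matrix.traceLinearMap (Fin n) ℂ ℂ)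

open Polynomial in
/-- The kernel of a nonzero polynomial in `f` has dimension at most the degree, when all
eigenspaces are at most one-dimensional. -/
lemma aux_finrank_ker {V : Type*} [AddCommGroup V] [Module ℂ V] [FiniteDimensional ℂ V]
    (f : Module.End ℂ V) (hf : ∀ μ : ℂ, Module.finrank ℂ (Module.End.eigenspace f μ) ≤ 1)
    (d : ℕ) : ∀ q : ℂ[X], q ≠ 0 → q.natDegree = d →
      Module.finrank ℂ (LinearMap.ker (aeval f q)) ≤ d := by
  induction d with
  | zero =>
    intro q hq hd
    obtain ⟨c, rfl⟩ : ∃ c, q = C c := ⟨_, eq_C_of_natDegree_eq_zero hd⟩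
    have hc : c ≠ 0 := by simpa using hq
    have : LinearMap.ker (aeval f (C c)) = ⊥ := by
      rw [LinearMap.ker_eq_bot']
      intro m hm
      simpa [Module.algebraMap_end_apply, hc] using hm
    rw [this]; simp
  | succ d ih =>
    intro q hq hd
    obtain ⟨a, ha⟩ := IsAlgClosed.exists_root q (by
      rw [degree_eq_natDegree hq, hd]; exact_mod_cast Nat.succ_ne_zero d)
    obtain ⟨r, rfl⟩ := dvd_iff_isRoot.mpr ha
    have hr : r ≠ 0 := right_ne_zero_of_mul hq
    have hrd : r.natDegree = d := by
      rw [natDegree_mul (X_sub_C_ne_zero a) hr, natDegree_X_sub_C] at hd; omega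
    have h1 := ih r hr hrd
    have h2 := hf a
    set g := aeval f r with hg
    set e := f - algebraMap ℂ (Module.End ℂ V) a with he
    have hcomp : aeval f ((X - C a) * r) = e * g := by simp [he, hg]
    rw [hcomp]
    have hE : Module.End.eigenspace f a = LinearMap.ker e := Module.End.eigenspace_def
    rw [hE] at h2
    -- restrict g to the kernel of e * g
    let K := LinearMap.ker (e * g)
    let φ : K →ₗ[ℂ] LinearMap.ker e := (g.comp K.subtype).codRestrict _ (by
      intro c
      exact LinearMap.mem_ker.mp c.2)
    have hrn := LinearMap.finrank_range_add_finrank_ker φ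
    have hr1 : Module.finrank ℂ (LinearMap.range φ) ≤ 1 := (Submodule.finrank_le _).trans h2
    have hk : Module.finrank ℂ (LinearMap.ker φ) ≤ Module.finrank ℂ (LinearMap.ker g) := by
      let ψ : LinearMap.ker φ →ₗ[ℂ] LinearMap.ker g :=
        (K.subtype.comp (LinearMap.ker φ).subtype).codRestrict _ (by
          intro c
          have h := c.2
          rw [LinearMap.mem_ker] at h ⊢
          exact congrArg Subtype.val h)
      apply LinearMap.finrank_le_finrank_of_injective (f := ψ)
      intro a b hab
      apply Subtype.ext; apply Subtype.ext
      exact congrArg (fun u : LinearMap.ker g => (u : V)) hab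
    change Module.finrank ℂ K ≤ _
    omega

open Polynomial in
lemma aux_poly_zero (n : ℕ) (x : Matrix (Fin n) (Fin n) ℂ)
    (hreg : ∀ μ : ℂ,
      Module.finrank ℂ (Module.End.eigenspace (Matrix.toLin' x) μ) ≤ 1)
    (q : ℂ[X]) (hq : aeval x q = 0) (hd : q.natDegree < n) : q = 0 := by
  by_contra h0
  have h := aux_finrank_ker (Matrix.toLin' x) hreg _ q h0 rfl
  have h2 : aeval (Matrix.toLin' x) q = 0 := by
    have : aeval (Matrix.toLinAlgEquiv' x) q = Matrix.toLinAlgEquiv' (aeval x q) :=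
      aeval_algHom_apply Matrix.toLinAlgEquiv' x q
    rw [hq, map_zero] at this
    exact this
  rw [h2, LinearMap.ker_zero, finrank_top] at h
  simp at h
  omega

open Polynomial in
lemma aux_coeff_iter (p : ℂ[X]) (k m : ℕ) : ((divX^[k]) p).coeff m = p.coeff (m + k) := by
  induction k generalizing m with
  | zero => simp
  | succ k ih => rw [Function.iterate_succ_apply', coeff_divX, ih]; congr 1; ring

open Polynomial in
/-- The coefficient matrices of the adjugate of `z - x`. -/
noncomputable def auxB {n : ℕ} (x : Matrix (Fin n) (Fin n) ℂ) (k : ℕ) :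
    Matrix (Fin n) (Fin n) ℂ := aeval x ((divX^[k]) x.charpoly)

lemma auxB_rec {n : ℕ} (x : Matrix (Fin n) (Fin n) ℂ) (k : ℕ) :
    auxB x k = auxB x (k+1) * x + x.charpoly.coeff k • 1 := by
  unfold auxB
  conv_lhs => rw [← Polynomial.divX_mul_X_add ((Polynomial.divX^[k]) x.charpoly)]
  rw [Function.iterate_succ_apply', aux_coeff_iter]
  simp [Algebra.algebraMap_eq_smul_one]

lemma auxB_n {n : ℕ} (x : Matrix (Fin n) (Fin n) ℂ) : auxB x n = 1 := by
  have : (Polynomial.divX^[n]) x.charpoly = 1 := by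
    ext m
    rw [aux_coeff_iter, Polynomial.coeff_one]
    have hd : x.charpoly.natDegree = n := by simp [Matrix.charpoly_natDegree_eq_dim]
    split_ifs with h
    · subst h
      have := x.charpoly_monic.coeff_natDegree
      rw [hd] at this; simpa using this
    · apply Polynomial.coeff_eq_zero_of_natDegree_lt; omega
  rw [auxB, this, map_one]

lemma auxB_sum {n : ℕ} (x : Matrix (Fin n) (Fin n) ℂ) (z : ℂ) :
    (∑ k ∈ Finset.range n, z ^ k • auxB x (k+1)) * (Matrix.scalar (Fin n) z - x) =
      x.charpoly.eval z • 1 := by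
  have h : ∀ m, (∑ k ∈ Finset.range m, z ^ k • auxB x (k+1)) * (Matrix.scalar (Fin n) z - x) =
      z ^ m • auxB x m - auxB x 0
        + (∑ k ∈ Finset.range m, x.charpoly.coeff k * z ^ k) • 1 := by
    intro m
    induction m with
    | zero => simp
    | succ m ih =>
      rw [Finset.sum_range_succ, add_mul, ih, Finset.sum_range_succ, auxB_rec x m]
      have hs : Matrix.scalar (Fin n) z = z • (1 : Matrix (Fin n) (Fin n) ℂ) := by
        simp [Matrix.smul_one_eq_diagonal]
      rw [hs, mul_sub, mul_smul_comm, mul_one, smul_mul_assoc, smul_add, add_smul, smul_smul,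
        smul_smul, pow_succ, mul_comm (z ^ m) z, mul_comm (z^m) (x.charpoly.coeff m)]
      abel
  have h0 : auxB x 0 = 0 := by simp [auxB, Matrix.aeval_self_charpoly]
  have hd : x.charpoly.natDegree = n := by simp [Matrix.charpoly_natDegree_eq_dim]
  have h1 : x.charpoly.coeff n = 1 := by
    have := x.charpoly_monic.coeff_natDegree
    rwa [hd] at this
  rw [h, h0, auxB_n, Polynomial.eval_eq_sum_range, hd, Finset.sum_range_succ, h1, add_smul]
  simp [add_comm]

/-- directional derivative of the determinant -/
lemma aux_deriv {n : ℕ} (x h : Matrix (Fin n) (Fin n) ℂ) (z : ℂ) (hz : x.charpoly.eval z ≠ 0) :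
    HasDerivAt (fun t : ℂ => (x + t • h).charpoly.eval z)
      (-∑ k ∈ Finset.range n, z ^ k * (auxB x (k+1) * h).trace) 0 := by
  set A := Matrix.scalar (Fin n) z - x with hA
  set S := ∑ k ∈ Finset.range n, z ^ k • auxB x (k+1) with hS
  have hSA : S * A = x.charpoly.eval z • 1 := auxB_sum x z
  set c := x.charpoly.eval z with hc
  have hdet : A.det = c := by rw [hc, Matrix.eval_charpoly]
  set M := -(c⁻¹ • (S * h)) with hM
  have hAS : A * S = c • 1 := by
    have h1 : (c⁻¹ • S) * A = 1 := by rw [smul_mul_assoc, hSA, smul_smul, inv_mul_cancel₀ hz, one_smul]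
    have h2 := mul_eq_one_comm.mp h1
    rw [mul_smul_comm] at h2
    rw [← h2, smul_smul, mul_inv_cancel₀ hz, one_smul]
  have hfun : (fun t : ℂ => (x + t • h).charpoly.eval z) = fun t : ℂ =>
      c * (1 + M.trace * t + (Matrix.det (1 + (Polynomial.X : Polynomial ℂ) • M.map Polynomial.C)).divX.divX.eval t * t ^ 2) := by
    funext t
    rw [← Matrix.det_one_add_smul, ← hdet, ← Matrix.det_mul, Matrix.eval_charpoly]
    congr 1
    rw [mul_add, mul_one, hM, mul_smul_comm, mul_neg, mul_smul_comm, ← mul_assoc, hAS,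
      smul_mul_assoc, one_mul, smul_smul, inv_mul_cancel₀ hz, one_smul, hA, smul_neg]
    abel
  rw [hfun]
  set P := (Matrix.det (1 + (Polynomial.X : Polynomial ℂ) • M.map Polynomial.C)).divX.divX
  have hP := P.hasDerivAt (0:ℂ)
  have h1 := ((((hasDerivAt_id (0:ℂ)).const_mul M.trace).const_add 1).add
    (hP.mul ((hasDerivAt_id (0:ℂ)).pow 2))).const_mul c
  refine HasDerivAt.congr_deriv h1 ?_
  have : M.trace = -(c⁻¹ * ∑ k ∈ Finset.range n, z ^ k * (auxB x (k+1) * h).trace) := by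
    rw [hM, Matrix.trace_neg, Matrix.trace_smul, hS, Finset.sum_mul, Matrix.trace_sum]
    simp
  rw [this]
  simp
  field_simp

lemma aux_differentiable {n : ℕ} (k : ℕ) :
    Differentiable ℂ (fun y : ↥(slC n) => (y : Matrix (Fin n) (Fin n) ℂ).charpoly.coeff k) := by
  have h1 : ∀ P : MvPolynomial (Fin n × Fin n) ℂ, Differentiable ℂ
      (fun y : ↥(slC n) => MvPolynomial.eval
        (fun ij : Fin n × Fin n => (y : Matrix (Fin n) (Fin n) ℂ) ij.1 ij.2) P) := by
    intro P
    induction P using MvPolynomial.induction_on with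
    | C a => simp
    | add p q hp hq => simp only [map_add]; exact hp.add hq
    | mul_X p ij hp =>
      simp only [map_mul, MvPolynomial.eval_X]
      apply hp.mul
      let L : ↥(slC n) →ₗ[ℂ] ℂ := (Matrix.entryLinearMap ℂ ℂ ij.1 ij.2).comp (slC n).subtype
      exact (LinearMap.toContinuousLinearMap L).differentiable
  convert h1 ((Matrix.charpoly.univ ℂ (Fin n)).coeff k) using 2 with y
  have := Matrix.charpoly.univ_coeff_eval₂Hom (Fin n) (RingHom.id ℂ)
    (fun ij : Fin n × Fin n => (y : Matrix (Fin n) (Fin n) ℂ) ij.1 ij.2) k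
  exact this.symm

lemma aux_D (n : ℕ) (hn : 0 < n) (x : ↥(slC n)) (h : ↥(slC n))
    (D : ↥(slC n) →L[ℂ] (Fin (n - 1) → ℂ))
    (hD : HasFDerivAt
        (fun y : ↥(slC n) =>
          fun k : Fin (n - 1) => (y : Matrix (Fin n) (Fin n) ℂ).charpoly.coeff k) D x)
    (k : Fin (n - 1)) :
    D h k = -(auxB x.1 (k + 1) * h.1).trace := by
  have hD' : ∀ k : Fin (n-1), HasDerivAt
      (fun t : ℂ => (x.1 + t • h.1).charpoly.coeff k) (D h k) 0 := by
    intro k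
    have hl : HasDerivAt (fun t : ℂ => x + t • h) h 0 := by
      have h0 := ((hasDerivAt_id (0:ℂ)).smul_const h).const_add x
      rw [one_smul] at h0
      exact h0
    have hD2 : HasFDerivAt
        (fun y : ↥(slC n) =>
          fun k : Fin (n - 1) => (y : Matrix (Fin n) (Fin n) ℂ).charpoly.coeff k) D
          (x + (0:ℂ) • h) := by simpa using hD
    have := hD2.comp_hasDerivAt (0:ℂ) hl
    exact (hasDerivAt_pi.mp this) k
  obtain ⟨m, rfl⟩ : ∃ m, n = m + 1 := ⟨n - 1, by omega⟩
  change Fin m at k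
  -- polynomial identity
  have htr : ∀ y : ↥(slC (m+1)), y.1.trace = 0 := fun y => y.2
  have hsum : ∀ y : ↥(slC (m+1)), ∀ z : ℂ, y.1.charpoly.eval z =
      ∑ k : Fin m, y.1.charpoly.coeff k * z ^ (k:ℕ) + z ^ (m+1) := by
    intro y z
    have hd : y.1.charpoly.natDegree = m + 1 := by simp [Matrix.charpoly_natDegree_eq_dim]
    have h1 : y.1.charpoly.coeff (m+1) = 1 := by
      have := y.1.charpoly_monic.coeff_natDegree
      rwa [hd] at this
    have h2 : y.1.charpoly.coeff m = 0 := by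
      have := Matrix.trace_eq_neg_charpoly_coeff y.1
      rw [htr] at this
      simpa using this
    rw [Polynomial.eval_eq_sum_range, hd, Finset.sum_range_succ, Finset.sum_range_succ, h1, h2,
      Finset.sum_range]
    simp
  have key : ∀ z : ℂ, x.1.charpoly.eval z ≠ 0 →
      ∑ k : Fin m, D h k * z ^ (k:ℕ) = ∑ k : Fin m, -(auxB x.1 (k+1) * h.1).trace * z ^ (k:ℕ) := by
    intro z hz
    have e1 := aux_deriv x.1 h.1 z hz
    have e2 : HasDerivAt (fun t : ℂ => (x.1 + t • h.1).charpoly.eval z)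
        (∑ k : Fin m, D h k * z ^ (k:ℕ)) 0 := by
      have e3 : (fun t : ℂ => (x.1 + t • h.1).charpoly.eval z) = fun t : ℂ =>
          ∑ k : Fin m, (x.1 + t • h.1).charpoly.coeff k * z ^ (k:ℕ) + z ^ (m+1) := by
        funext t
        exact hsum (x + t • h) z
      rw [e3]
      apply HasDerivAt.add_const
      apply HasDerivAt.fun_sum
      intro i _
      exact (hD' i).mul_const _
    rw [e2.unique e1, Finset.sum_range_succ, auxB_n, one_mul, htr, mul_zero, add_zero,
      Finset.sum_range, ← Finset.sum_neg_distrib]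
    apply Finset.sum_congr rfl
    intro i _
    ring
  let Q : Polynomial ℂ := ∑ k : Fin m, Polynomial.C (D h k + (auxB x.1 (k+1) * h.1).trace) *
    Polynomial.X ^ (k:ℕ)
  have hQ : x.1.charpoly * Q = 0 := by
    apply Polynomial.funext
    intro z
    rw [Polynomial.eval_mul, Polynomial.eval_zero]
    by_cases hz : x.1.charpoly.eval z = 0
    · simp [hz]
    · have := key z hz
      have hQz : Q.eval z = 0 := by
        simp only [Q, Polynomial.eval_finsetSum, Polynomial.eval_mul, Polynomial.eval_C,
          Polynomial.eval_pow, Polynomial.eval_X, add_mul, Finset.sum_add_distrib]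
        rw [this, ← Finset.sum_add_distrib]
        simp
      simp [hQz]
  have hQ0 : Q = 0 := (mul_eq_zero.mp hQ).resolve_left x.1.charpoly_monic.ne_zero
  have hck : Q.coeff k = D h k + (auxB x.1 (k+1) * h.1).trace := by
    simp only [Q, Polynomial.finsetSum_coeff, Polynomial.coeff_C_mul, Polynomial.coeff_X_pow]
    rw [Finset.sum_eq_single k]
    · simp
    · intro b _ hb
      have : (k:ℕ) ≠ b := fun h => hb (Fin.ext h.symm)
      simp [this]
    · simp
  rw [hQ0, Polynomial.coeff_zero] at hck
  exact eq_neg_of_add_eq_zero_left hck.symm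

/-- If `x ∈ sl_n(ℂ)` has exactly one Jordan block for each eigenvalue (every eigenspace is
at most one-dimensional), then `x` is a regular point of the adjoint quotient map
`χ : sl_n → ℂ^{n-1}` sending a matrix to the nontrivial coefficients of its characteristic
polynomial: the derivative of `χ` at `x` is surjective. -/
theorem adjoint_quotient_regular_point (n : ℕ)
    (x : Matrix (Fin n) (Fin n) ℂ) (hx : x ∈ slC n)
    (hreg : ∀ μ : ℂ,
      Module.finrank ℂ (Module.End.eigenspace (Matrix.toLin' x) μ) ≤ 1) :
    ∃ D : ↥(slC n) →L[ℂ] (Fin (n - 1) → ℂ),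
      HasFDerivAt
        (fun y : ↥(slC n) =>
          fun k : Fin (n - 1) => (y : Matrix (Fin n) (Fin n) ℂ).charpoly.coeff k)
        D ⟨x, hx⟩ ∧
      Function.Surjective D := by
  have hdiff : Differentiable ℂ (fun y : ↥(slC n) =>
          fun k : Fin (n - 1) => (y : Matrix (Fin n) (Fin n) ℂ).charpoly.coeff k) :=
    differentiable_pi.mpr fun k => aux_differentiable k
  obtain ⟨D, hD⟩ := hdiff ⟨x, hx⟩
  refine ⟨D, hD, ?_⟩
  rcases Nat.eq_zero_or_pos n with hn | hn
  · subst hn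
    intro v
    exact ⟨0, funext fun k => absurd k.2 (by omega)⟩
  have hDk := fun h k => aux_D n hn ⟨x, hx⟩ h D hD k
  by_contra hns
  have hlt : LinearMap.range (D : ↥(slC n) →ₗ[ℂ] (Fin (n - 1) → ℂ)) < ⊤ := by
    rw [lt_top_iff_ne_top]
    intro h
    exact hns (LinearMap.range_eq_top.mp h)
  obtain ⟨f, hf0, hf⟩ := Submodule.exists_le_ker_of_lt_top _ hlt
  let φ : Fin (n-1) → ℂ := fun k => f (Pi.single k 1)
  have hfφ : ∀ v, f v = ∑ k, v k * φ k := by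
    intro v
    conv_lhs => rw [pi_eq_sum_univ' v]
    simp [φ, map_sum]
  apply hf0
  let M : Matrix (Fin n) (Fin n) ℂ := ∑ k : Fin (n-1), φ k • auxB x (k+1)
  have hM : ∀ h : ↥(slC n), (M * h.1).trace = 0 := by
    intro h
    have h1 : f (D h) = 0 := hf ⟨h, rfl⟩
    rw [hfφ] at h1
    simp only [hDk] at h1
    simp only [M, Finset.sum_mul, Matrix.trace_sum, smul_mul_assoc, Matrix.trace_smul, smul_eq_mul]
    rw [← neg_eq_zero, ← h1, ← Finset.sum_neg_distrib]
    exact Finset.sum_congr rfl fun i _ => by ring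
  have hn0 : (n:ℂ) ≠ 0 := by exact_mod_cast hn.ne'
  have hMs : M = (M.trace / n) • (1 : Matrix (Fin n) (Fin n) ℂ) := by
    rw [Matrix.ext_iff_trace_mul_right]
    intro N
    have := hM ⟨N - (N.trace / n) • (1 : Matrix (Fin n) (Fin n) ℂ), by
      change Matrix.trace (N - (N.trace / n) • (1 : Matrix (Fin n) (Fin n) ℂ)) = 0
      rw [Matrix.trace_sub, Matrix.trace_smul, Matrix.trace_one]
      simp [hn0]⟩
    rw [mul_sub, Matrix.trace_sub, mul_smul_comm, mul_one, Matrix.trace_smul, sub_eq_zero] at this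
    rw [this, smul_mul_assoc, one_mul, Matrix.trace_smul, smul_eq_mul, smul_eq_mul]
    ring
  let q : Polynomial ℂ := ∑ k : Fin (n-1), Polynomial.C (φ k) * (Polynomial.divX^[(k:ℕ)+1]) x.charpoly
    - Polynomial.C (M.trace / n)
  have hqx : Polynomial.aeval x q = 0 := by
    simp only [q, map_sub, map_sum, map_mul, Polynomial.aeval_C, Algebra.algebraMap_eq_smul_one,
      smul_mul_assoc, one_mul]
    rw [sub_eq_zero]
    exact hMs
  have hd : x.charpoly.natDegree = n := by simp [Matrix.charpoly_natDegree_eq_dim]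
  have hmon : x.charpoly.coeff n = 1 := by
    have := x.charpoly_monic.coeff_natDegree
    rwa [hd] at this
  have hbig : ∀ i, n < i → x.charpoly.coeff i = 0 := fun i hi =>
    Polynomial.coeff_eq_zero_of_natDegree_lt (by omega)
  have hqc : ∀ m, 0 < m → q.coeff m = ∑ k : Fin (n-1), φ k * x.charpoly.coeff (m + (k + 1)) := by
    intro m hm
    simp only [q, Polynomial.coeff_sub, Polynomial.finsetSum_coeff, Polynomial.coeff_C_mul,
      aux_coeff_iter]
    rw [Polynomial.coeff_C_of_ne_zero hm.ne', sub_zero]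
  have hqd : q.natDegree < n := by
    have : q.natDegree ≤ n - 1 := by
      rw [Polynomial.natDegree_le_iff_coeff_eq_zero]
      intro N hN
      rw [hqc N (by omega)]
      exact Finset.sum_eq_zero fun k _ => by rw [hbig _ (by omega), mul_zero]
    omega
  have hq0 := aux_poly_zero n x hreg q hqx hqd
  have hφ : ∀ (j : ℕ) (hj : j < n - 1), φ ⟨j, hj⟩ = 0 := by
    intro j
    induction j using Nat.strong_induction_on with
    | _ j ih =>
      intro hj
      have h1 := hqc (n - 1 - j) (by omega)
      rw [hq0, Polynomial.coeff_zero, Finset.sum_eq_single ⟨j, hj⟩] at h1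
      · have : n - 1 - j + (j + 1) = n := by omega
        simp only [this, hmon, mul_one] at h1
        exact h1.symm
      · intro b _ hb
        rcases lt_trichotomy (b:ℕ) j with hlt | heq | hgt
        · rw [ih b hlt b.2, zero_mul]
        · exact absurd (Fin.ext heq) hb
        · rw [hbig _ (by omega), mul_zero]
      · simp
  ext v
  simp only [LinearMap.comp_apply, LinearMap.zero_apply]
  exact hφ v.1 v.2
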